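/- Let s > 0 and let f : [-1,1] → ℝ be a continuous function of class X^s. Then there is a constant C > 0 (depending only on f and s) such that for every n ≥ 2 the error of the n-point Clenshaw–Curtis rule satisfies |E_n^C(f)| ≤ C · n^{-s-1}. -/

import Mathlib

/-- The `m`-th Chebyshev coefficient of `f`:
`a_m = (2/π) ∫_0^π f(cos θ) cos(mθ) dθ`. -/
noncomputable def chebCoeff (f : ℝ → ℝ) (m : ℕ) : ℝ :=
  (2 / Real.pi) * ∫ θ in (0:ℝ)..Real.pi, f (Real.cos θ) * Real.cos (m * θ)

/-!
The Fourier series of the even function `θ ↦ f (cos θ)` is the Chebyshev series of `f`; it converges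
absolutely, so the quadrature error `E` satisfies `E f = ∑ a_m E(T_m)`. Put `N = n - 1`. Exactness
kills the terms with `m ≤ N`. The polynomials `T_{r + 2 N j}` and `T_r` agree at the nodes
(aliasing), so for `|r| ≤ N` exactness on `T_r` gives
`E(T_{r + 2 N j}) = ∫ T_{r + 2 N j} - ∫ T_r = O(1 / (1 + r ^ 2))`. Writing `m = r + 2 N j`, the sum
over `r` is bounded uniformly in `N`, while the sum over `j` contributes `N ^ (-s - 1)`; this saves
the factor `n` lost by bounding every `E(T_m)` with a constant.
-/

open Real Set MeasureTheory Polynomial Polynomial.Chebyshev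

section EvenFourier

variable {P : ℝ}

theorem fourier_add_fourier_neg (n : ℤ) (x : ℝ) :
    fourier n (x : AddCircle P) + fourier (-n) (x : AddCircle P) =
      2 * Complex.cos (2 * π * n * x / P) := by
  rw [Complex.two_cos, fourier_coe_apply, fourier_coe_apply]
  push_cast
  ring_nf

variable [Fact (0 < P)] {F : C(AddCircle P, ℂ)}

theorem fourierCoeff_of_even (hF : Function.Even F) (n : ℤ) :
    fourierCoeff F n =
      2 / P * ∫ x in (0 : ℝ)..P / 2, Complex.cos (2 * π * n * x / P) * F x := by
  let g : ℝ → ℂ := fun x => fourier (-n) (x : AddCircle P) • F x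
  have hg : Continuous g := by fun_prop
  have fold (x : ℝ) : g (-x) + g x = 2 * (Complex.cos (2 * π * n * x / P) * F x) := by
    have hneg : g (-x) = fourier n (x : AddCircle P) * F x := by
      simp only [g, AddCircle.coe_neg, hF _, fourier_apply, smul_neg, neg_smul, neg_neg,
        smul_eq_mul]
    rw [hneg, ← mul_assoc, ← fourier_add_fourier_neg, add_mul]
    rfl
  have reflect : ∫ x in -(P / 2)..0, g x = ∫ x in (0 : ℝ)..P / 2, g (-x) := by
    simp [intervalIntegral.integral_comp_neg]
  calc fourierCoeff F n
      = (1 / P) • ∫ x in -(P / 2)..P / 2, g x := by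
        rw [fourierCoeff_eq_intervalIntegral _ _ (-(P / 2)),
          show -(P / 2) + P = P / 2 by ring]
    _ = (1 / P) • ∫ x in (0 : ℝ)..P / 2, (g (-x) + g x) := by
        rw [← intervalIntegral.integral_add_adjacent_intervals (hg.intervalIntegrable _ 0)
          (hg.intervalIntegrable 0 _), reflect, ← intervalIntegral.integral_add
          (Continuous.intervalIntegrable (by fun_prop) _ _) (hg.intervalIntegrable _ _)]
    _ = 2 / P * ∫ x in (0 : ℝ)..P / 2, Complex.cos (2 * π * n * x / P) * F x := by
        simp_rw [fold]
        rw [intervalIntegral.integral_const_mul, Complex.real_smul]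
        push_cast
        ring

theorem fourierCoeff_neg_of_even (hF : Function.Even F) (n : ℤ) :
    fourierCoeff F (-n) = fourierCoeff F n := by
  simp only [fourierCoeff_of_even hF, Int.cast_neg, mul_neg, neg_mul, neg_div, Complex.cos_neg]

theorem summable_fourierCoeff_of_even (hF : Function.Even F)
    (hs : Summable fun m : ℕ => fourierCoeff F m) : Summable (fourierCoeff F) :=
  .of_nat_of_neg hs (by simpa only [fourierCoeff_neg_of_even hF] using hs)

theorem hasSum_cos_series_of_even (hF : Function.Even F)
    (hs : Summable fun m : ℕ => fourierCoeff F m) (x : ℝ) :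
    HasSum (fun m : ℕ => 2 * fourierCoeff F m * Complex.cos (2 * π * m * x / P))
      (F x + fourierCoeff F 0) := by
  have h := (has_pointwise_sum_fourier_series_of_summable
    (summable_fourierCoeff_of_even hF hs) (x : AddCircle P)).nat_add_neg
  simp_rw [fourierCoeff_neg_of_even hF, ← smul_add, fourier_add_fourier_neg] at h
  convert! h using 2
  · rw [smul_eq_mul, Int.cast_natCast]
    ring
  · rw [fourier_zero, smul_eq_mul, mul_one]

end EvenFourier

section ChebyshevSeries

local instance : Fact (0 < 2 * π) := ⟨two_pi_pos⟩

variable {f : ℝ → ℝ}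

/-- The even function `θ ↦ f (cos θ)` on the circle, with complex values so that Mathlib's Fourier
series apply; its cosine series is the Chebyshev series of `f`. -/
noncomputable def cosPullback (f : ℝ → ℝ) (hf : ContinuousOn f (Icc (-1) 1)) :
    C(AddCircle (2 * π), ℂ) where
  toFun θ := f (Real.Angle.cos θ)
  continuous_toFun := by
    refine Complex.continuous_ofReal.comp (hf.comp_continuous Real.Angle.continuous_cos fun θ => ?_)
    induction θ using Real.Angle.induction_on
    exact cos_mem_Icc _

theorem cosPullback_coe (hf : ContinuousOn f (Icc (-1) 1)) (θ : ℝ) :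
    cosPullback f hf θ = f (cos θ) := rfl

theorem even_cosPullback (hf : ContinuousOn f (Icc (-1) 1)) :
    Function.Even (cosPullback f hf) :=
  fun θ => congrArg (fun y => (f y : ℂ)) (Real.Angle.cos_neg θ)

theorem fourierCoeff_cosPullback (hf : ContinuousOn f (Icc (-1) 1)) (m : ℕ) :
    fourierCoeff (cosPullback f hf) m = (chebCoeff f m / 2 : ℝ) := by
  have integrand (θ : ℝ) : Complex.cos (2 * π * (m : ℤ) * θ / (2 * π : ℝ)) * cosPullback f hf θ =
      (f (cos θ) * cos (m * θ) : ℝ) := by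
    rw [cosPullback_coe, mul_comm]
    push_cast
    congr 2
    field_simp
  rw [fourierCoeff_of_even (even_cosPullback hf), mul_div_cancel_left₀ π two_ne_zero]
  simp_rw [integrand]
  rw [intervalIntegral.integral_ofReal, chebCoeff]
  push_cast
  field_simp

theorem hasSum_chebyshev_series (hf : ContinuousOn f (Icc (-1) 1)) (hs : Summable (chebCoeff f))
    {x : ℝ} (hx : x ∈ Icc (-1) 1) :
    HasSum (fun m : ℕ => chebCoeff f m * (T ℝ m).eval x) (f x + chebCoeff f 0 / 2) := by
  obtain ⟨θ, rfl⟩ : ∃ θ, cos θ = x := ⟨_, cos_arccos hx.1 hx.2⟩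
  have hs' : Summable fun m : ℕ => fourierCoeff (cosPullback f hf) m := by
    simpa only [fourierCoeff_cosPullback] using Complex.summable_ofReal.2 (hs.div_const 2)
  have h := hasSum_cos_series_of_even (even_cosPullback hf) hs' θ
  have h0 := fourierCoeff_cosPullback hf 0
  rw [Nat.cast_zero] at h0
  rw [← Complex.hasSum_ofReal]
  convert! h using 1
  · funext m
    rw [fourierCoeff_cosPullback, T_real_cos]
    push_cast
    field_simp
  · rw [h0, cosPullback_coe]
    push_cast
    rfl

theorem summable_chebCoeff_of_abs_le {φ : ℕ → ℝ} (hφs : Summable φ)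
    (hφf : ∀ m, 1 ≤ m → |chebCoeff f m| ≤ φ m) : Summable (chebCoeff f) :=
  (summable_nat_add_iff 1).1 <| .of_norm_bounded ((summable_nat_add_iff 1).2 hφs)
    fun m => hφf (m + 1) (Nat.le_add_left 1 m)

end ChebyshevSeries

section ChebyshevMoments

theorem integral_eval_T_eq_integral_cos_mul_sin (z : ℤ) :
    ∫ x in (-1 : ℝ)..1, (T ℝ z).eval x = ∫ θ in (0 : ℝ)..π, cos (z * θ) * sin θ := by
  have cos_subst := intervalIntegral.integral_comp_mul_deriv (a := 0) (b := π) (f := cos)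
    (f' := fun θ => -sin θ) (g := fun x => (T ℝ z).eval x)
    (fun θ _ => hasDerivAt_cos θ) (by fun_prop) (by fun_prop)
  simp only [cos_zero, cos_pi, Function.comp_apply, T_real_cos, mul_neg,
    intervalIntegral.integral_neg] at cos_subst
  rw [intervalIntegral.integral_symm, ← cos_subst, neg_neg]

theorem sq_sub_one_mul_integral_eval_T (z : ℤ) :
    ((z : ℝ) ^ 2 - 1) * ∫ x in (-1 : ℝ)..1, (T ℝ z).eval x = -cos (z * π) - 1 := by
  have primitive (θ : ℝ) : HasDerivAt
      (fun θ : ℝ => z * (sin (z * θ) * sin θ) + cos (z * θ) * cos θ)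
      (((z : ℝ) ^ 2 - 1) * (cos (z * θ) * sin θ)) θ := by
    have hlin : HasDerivAt (fun θ : ℝ => (z : ℝ) * θ) z θ := by
      simpa using (hasDerivAt_id θ).const_mul (z : ℝ)
    refine (((hlin.sin.mul (hasDerivAt_sin θ)).const_mul (z : ℝ)).add
      (hlin.cos.mul (hasDerivAt_cos θ))).congr_deriv ?_
    ring
  rw [integral_eval_T_eq_integral_cos_mul_sin, ← intervalIntegral.integral_const_mul,
    intervalIntegral.integral_eq_sub_of_hasDerivAt (fun θ _ => primitive θ)
      (Continuous.intervalIntegrable (by fun_prop) _ _)]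
  simp

theorem abs_integral_eval_T_le_two (z : ℤ) : |∫ x in (-1 : ℝ)..1, (T ℝ z).eval x| ≤ 2 := by
  have hT : ∀ x ∈ uIoc (-1 : ℝ) 1, ‖(T ℝ z).eval x‖ ≤ 1 := fun x hx => by
    rw [uIoc_of_le (by norm_num)] at hx
    exact abs_eval_T_real_le_one z (abs_le.2 ⟨hx.1.le, hx.2⟩)
  calc |∫ x in (-1 : ℝ)..1, (T ℝ z).eval x|
      ≤ 1 * |1 - (-1)| := intervalIntegral.norm_integral_le_of_norm_le_const hT
    _ = 2 := by norm_num

theorem abs_integral_eval_T_le (z : ℤ) :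
    |∫ x in (-1 : ℝ)..1, (T ℝ z).eval x| ≤ 6 / (1 + (z : ℝ) ^ 2) := by
  set I := ∫ x in (-1 : ℝ)..1, (T ℝ z).eval x
  have hI := abs_le.1 (abs_integral_eval_T_le_two z)
  have hcos := abs_le.1 (abs_cos_le_one (z * π))
  have hmul : (1 + (z : ℝ) ^ 2) * I = -cos (z * π) - 1 + 2 * I := by
    rw [← sq_sub_one_mul_integral_eval_T]
    ring
  rw [le_div_iff₀' (by positivity), ← abs_of_pos (by positivity : 0 < 1 + (z : ℝ) ^ 2), ← abs_mul,
    hmul, abs_le]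
  constructor <;> linarith

end ChebyshevMoments

section QuadratureError

variable {ι : Type*} [Fintype ι] {w x : ι → ℝ}

/-- The error on `g` of the quadrature rule on `[-1, 1]` with weights `w` and nodes `x`. -/
noncomputable def quadError (w x : ι → ℝ) (g : ℝ → ℝ) : ℝ :=
  (∫ t in (-1 : ℝ)..1, g t) - ∑ k, w k * g (x k)

theorem quadError_const_mul (c : ℝ) (g : ℝ → ℝ) :
    quadError w x (fun t => c * g t) = c * quadError w x g := by
  simp only [quadError, intervalIntegral.integral_const_mul, mul_sub, Finset.mul_sum,
    mul_left_comm]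

theorem quadError_add_const {g : ℝ → ℝ} (hg : IntervalIntegrable g volume (-1) 1) (c : ℝ) :
    quadError w x (fun t => g t + c) = quadError w x g + c * quadError w x 1 := by
  simp only [quadError, intervalIntegral.integral_add hg intervalIntegrable_const, mul_add,
    Finset.sum_add_distrib, ← Finset.sum_mul, intervalIntegral.integral_const, Pi.one_apply,
    smul_eq_mul, mul_one]
  ring

theorem hasSum_quadError {g : ℕ → ℝ → ℝ} {G : ℝ → ℝ} {b : ℕ → ℝ} (hx : ∀ k, x k ∈ Icc (-1) 1)
    (hg : ∀ m, Continuous (g m)) (hb : Summable b) (hgb : ∀ m, ∀ t ∈ Icc (-1) 1, |g m t| ≤ b m)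
    (hG : ∀ t ∈ Icc (-1) 1, HasSum (fun m => g m t) (G t)) :
    HasSum (fun m => quadError w x (g m)) (quadError w x G) := by
  have mem_Icc {t : ℝ} (ht : t ∈ uIoc (-1) 1) : t ∈ Icc (-1 : ℝ) 1 :=
    Ioc_subset_Icc_self (uIoc_of_le (by norm_num : (-1 : ℝ) ≤ 1) ▸ ht)
  have integral : HasSum (fun m => ∫ t in (-1 : ℝ)..1, g m t) (∫ t in (-1 : ℝ)..1, G t) :=
    intervalIntegral.hasSum_integral_of_dominated_convergence (fun m _ => b m)
      (fun m => (hg m).aestronglyMeasurable)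
      (fun m => .of_forall fun t ht => hgb m t (mem_Icc ht))
      (.of_forall fun _ _ => hb) intervalIntegrable_const
      (.of_forall fun t ht => hG t (mem_Icc ht))
  exact integral.sub (hasSum_sum fun k _ => (hG (x k) (hx k)).mul_left (w k))

end QuadratureError

section Aliasing

variable {N : ℕ} {w : Fin (N + 1) → ℝ} {f : ℝ → ℝ}

/-- The error on `g` of the rule with weights `w` at the `N + 1` Clenshaw–Curtis nodes
`cos (k * π / N)`; thus `N = n - 1` for the `n`-point rule. -/
noncomputable def clenshawCurtisError (w : Fin (N + 1) → ℝ) (g : ℝ → ℝ) : ℝ :=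
  quadError w (fun k => node N k) g

/-- `w` are the Clenshaw–Curtis weights: the rule at the `N + 1` Clenshaw–Curtis nodes is exact up
to degree `N`. -/
def IsClenshawCurtis (w : Fin (N + 1) → ℝ) : Prop :=
  ∀ p : ℝ[X], p.natDegree ≤ N → clenshawCurtisError w (fun t => p.eval t) = 0

theorem eval_T_add_two_mul_node (hN : N ≠ 0) (z : ℤ) (j k : ℕ) :
    (T ℝ (z + 2 * N * j)).eval (node N k) = (T ℝ z).eval (node N k) := by
  rw [node, T_real_cos, T_real_cos, ← cos_add_nat_mul_two_pi (z * (k * π / N)) (j * k)]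
  congr 1
  push_cast
  field_simp

namespace IsClenshawCurtis

theorem error_T_eq_zero (hw : IsClenshawCurtis w) {z : ℤ} (hz : z.natAbs ≤ N) :
    clenshawCurtisError w (fun t => (T ℝ z).eval t) = 0 :=
  hw _ ((natDegree_T ℝ z).trans_le hz)

theorem error_T_add_two_mul (hw : IsClenshawCurtis w) (hN : N ≠ 0) {r : ℤ} (hr : r.natAbs ≤ N)
    (j : ℕ) : clenshawCurtisError w (fun t => (T ℝ (r + 2 * N * j)).eval t) =
      (∫ t in (-1 : ℝ)..1, (T ℝ (r + 2 * N * j)).eval t) - ∫ t in (-1 : ℝ)..1, (T ℝ r).eval t := by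
  have exact_r := hw.error_T_eq_zero hr
  simp only [clenshawCurtisError, quadError, eval_T_add_two_mul_node hN] at exact_r ⊢
  linarith

theorem abs_error_T_add_two_mul_le (hw : IsClenshawCurtis w) (hN : N ≠ 0) {r : ℤ}
    (hr : r.natAbs ≤ N) (j : ℕ) : |clenshawCurtisError w (fun t => (T ℝ (r + 2 * N * j)).eval t)| ≤
      12 / (1 + (r : ℝ) ^ 2) := by
  have hsq : (r : ℝ) ^ 2 ≤ ((r + 2 * N * j : ℤ) : ℝ) ^ 2 := by
    obtain rfl | hj := Nat.eq_zero_or_pos j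
    · simp
    have hNj : N ≤ N * j := Nat.le_mul_of_pos_right N hj
    have habs : r.natAbs ≤ (r + 2 * N * j).natAbs := by
      rw [mul_assoc, ← Nat.cast_mul]
      omega
    exact_mod_cast Int.natAbs_le_iff_sq_le.1 habs
  rw [hw.error_T_add_two_mul hN hr]
  calc _ ≤ 6 / (1 + ((r + 2 * N * j : ℤ) : ℝ) ^ 2) + 6 / (1 + (r : ℝ) ^ 2) :=
        (abs_sub _ _).trans (add_le_add (abs_integral_eval_T_le _) (abs_integral_eval_T_le r))
    _ ≤ 6 / (1 + (r : ℝ) ^ 2) + 6 / (1 + (r : ℝ) ^ 2) := by gcongr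
    _ = 12 / (1 + (r : ℝ) ^ 2) := by ring

theorem hasSum_error (hw : IsClenshawCurtis w) (hf : ContinuousOn f (Icc (-1) 1))
    (hs : Summable (chebCoeff f)) :
    HasSum (fun m : ℕ => chebCoeff f m * clenshawCurtisError w (fun t => (T ℝ m).eval t))
      (clenshawCurtisError w f) := by
  have hsum := hasSum_quadError (w := w) (x := fun k => node N k)
    (g := fun m t => chebCoeff f m * (T ℝ m).eval t) (b := fun m => |chebCoeff f m|)
    (fun _ => node_mem_Icc) (fun m => by fun_prop) hs.abs
    (fun m t ht => by
      rw [abs_mul]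
      exact mul_le_of_le_one_right (abs_nonneg _) (abs_eval_T_real_le_one _ (abs_le.2 ht)))
    (fun t ht => hasSum_chebyshev_series hf hs ht)
  have exact_one : quadError w (fun k => node N k) 1 = 0 := by
    simpa [clenshawCurtisError, Pi.one_def] using hw 1 (by simp)
  have hint : IntervalIntegrable f volume (-1) 1 :=
    ContinuousOn.intervalIntegrable (by rwa [uIcc_of_le (by norm_num)])
  rwa [quadError_add_const hint, exact_one, mul_zero, add_zero,
    funext fun m => quadError_const_mul _ _] at hsum

theorem hasSum_error_nat_add (hw : IsClenshawCurtis w) (hf : ContinuousOn f (Icc (-1) 1))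
    (hs : Summable (chebCoeff f)) :
    HasSum (fun m : ℕ => chebCoeff f (m + N) *
      clenshawCurtisError w (fun t => (T ℝ (m + N : ℕ)).eval t)) (clenshawCurtisError w f) := by
  have head : ∑ m ∈ Finset.range N,
      chebCoeff f m * clenshawCurtisError w (fun t => (T ℝ m).eval t) = 0 := by
    refine Finset.sum_eq_zero fun m hm => ?_
    rw [hw.error_T_eq_zero (z := m) (Finset.mem_range.1 hm).le, mul_zero]
  simpa only [head, sub_zero] using (hasSum_nat_add_iff' N).2 (hw.hasSum_error hf hs)

end IsClenshawCurtis

end Aliasing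

section BlockSums

theorem norm_le_tsum_mul_sum_of_hasSum {E : Type*} [NormedAddCommGroup E] {M : ℕ} [NeZero M]
    {c : ℕ → E} {S : E} (hc : HasSum c S) {u : ℕ → ℝ} {v : Fin M → ℝ} (hu : Summable u)
    (hcuv : ∀ j (i : Fin M), ‖c (j * M + i)‖ ≤ u j * v i) : ‖S‖ ≤ (∑' j, u j) * ∑ i, v i :=
  ((Nat.divModEquiv M).symm.hasSum_iff.2 hc).norm_le_of_bounded
    (hu.hasSum.mul (hasSum_fintype v)
      (summable_mul_of_summable_norm hu.norm (hasSum_fintype v).summable.norm))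
    fun ji => hcuv ji.1 ji.2

theorem summable_one_div_one_add_int_sq : Summable fun z : ℤ => 1 / (1 + (z : ℝ) ^ 2) := by
  refine .of_norm_bounded_eventually (summable_one_div_int_pow.2 one_lt_two) ?_
  filter_upwards [(finite_singleton (0 : ℤ)).compl_mem_cofinite] with z hz
  have hz0 : (z : ℝ) ≠ 0 := Int.cast_ne_zero.2 hz
  rw [norm_of_nonneg (by positivity)]
  gcongr
  linarith

theorem sum_one_div_one_add_sub_sq_le (M : ℕ) (a : ℤ) :
    ∑ i : Fin M, 1 / (1 + ((i - a : ℤ) : ℝ) ^ 2) ≤ ∑' z : ℤ, 1 / (1 + (z : ℝ) ^ 2) := by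
  have inj : Function.Injective fun i : Fin M => (i : ℤ) - a := fun i j h => by grind
  rw [← tsum_fintype (L := .unconditional _)]
  exact tsum_comp_le_tsum_of_inj summable_one_div_one_add_int_sq (fun z => by positivity) inj

end BlockSums

section Rate

variable {N : ℕ} {w : Fin (N + 1) → ℝ} {f : ℝ → ℝ}

theorem IsClenshawCurtis.abs_error_le_of_antitoneOn (hw : IsClenshawCurtis w) (hN : N ≠ 0)
    (hf : ContinuousOn f (Icc (-1) 1)) {φ : ℕ → ℝ} (hφ : AntitoneOn φ (Ici 1)) (hφs : Summable φ)
    (hφf : ∀ m, 1 ≤ m → |chebCoeff f m| ≤ φ m) :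
    |clenshawCurtisError w f| ≤
      12 * (∑' z : ℤ, 1 / (1 + (z : ℝ) ^ 2)) * ∑' j : ℕ, φ ((2 * j + 1) * N) := by
  have : NeZero (2 * N) := ⟨by omega⟩
  have one_le (j : ℕ) : 1 ≤ (2 * j + 1) * N := Nat.mul_pos (by omega) (Nat.pos_of_ne_zero hN)
  have φ_nonneg (j : ℕ) : 0 ≤ φ ((2 * j + 1) * N) := (abs_nonneg _).trans (hφf _ (one_le j))
  have φ_summable : Summable fun j : ℕ => φ ((2 * j + 1) * N) :=
    hφs.comp_injective fun i j hij => by simpa [hN] using hij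
  have block (j : ℕ) (i : Fin (2 * N)) :
      ‖chebCoeff f (j * (2 * N) + i + N) *
        clenshawCurtisError w (fun t => (T ℝ (j * (2 * N) + i + N : ℕ)).eval t)‖ ≤
      φ ((2 * j + 1) * N) * (12 / (1 + ((i - N : ℤ) : ℝ) ^ 2)) := by
    have hle : (2 * j + 1) * N ≤ j * (2 * N) + i + N := by linarith [Nat.zero_le i]
    have residue : ((j * (2 * N) + i + N : ℕ) : ℤ) = (i - N : ℤ) + 2 * N * (j + 1 : ℕ) := by
      push_cast
      ring
    rw [norm_mul, residue]
    exact mul_le_mul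
      ((hφf _ ((one_le j).trans hle)).trans (hφ (one_le j) ((one_le j).trans hle) hle))
      (hw.abs_error_T_add_two_mul_le hN (by omega) (j + 1)) (norm_nonneg _) (φ_nonneg j)
  have hS := hw.hasSum_error_nat_add hf (summable_chebCoeff_of_abs_le hφs hφf)
  calc |clenshawCurtisError w f|
      ≤ (∑' j : ℕ, φ ((2 * j + 1) * N)) *
          ∑ i : Fin (2 * N), 12 / (1 + ((i - N : ℤ) : ℝ) ^ 2) :=
        norm_le_tsum_mul_sum_of_hasSum hS φ_summable block
    _ = 12 * (∑ i : Fin (2 * N), 1 / (1 + ((i - N : ℤ) : ℝ) ^ 2)) *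
          ∑' j : ℕ, φ ((2 * j + 1) * N) := by
        simp_rw [div_eq_mul_one_div (12 : ℝ), ← Finset.mul_sum]
        ring
    _ ≤ 12 * (∑' z : ℤ, 1 / (1 + (z : ℝ) ^ 2)) * ∑' j : ℕ, φ ((2 * j + 1) * N) := by
        have tsum_φ_nonneg : 0 ≤ ∑' j : ℕ, φ ((2 * j + 1) * N) := tsum_nonneg φ_nonneg
        gcongr
        exact sum_one_div_one_add_sub_sq_le (2 * N) N

/-- The factor `K` in the bound `A * K * (n - 1) ^ (-s - 1)` for the `n`-point Clenshaw–Curtis error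
of functions with `|chebCoeff f m| ≤ A * m ^ (-s - 1)`. -/
noncomputable def clenshawCurtisConst (s : ℝ) : ℝ :=
  12 * (∑' z : ℤ, 1 / (1 + (z : ℝ) ^ 2)) * ∑' j : ℕ, (2 * j + 1 : ℝ) ^ (-s - 1)

theorem clenshawCurtisConst_nonneg (s : ℝ) : 0 ≤ clenshawCurtisConst s :=
  mul_nonneg (mul_nonneg (by norm_num) (tsum_nonneg fun z => by positivity))
    (tsum_nonneg fun j => by positivity)

theorem IsClenshawCurtis.abs_error_le_of_rpow_decay (hw : IsClenshawCurtis w) (hN : N ≠ 0)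
    {s A : ℝ} (hs : 0 < s) (hf : ContinuousOn f (Icc (-1) 1))
    (hA : ∀ m : ℕ, 1 ≤ m → |chebCoeff f m| ≤ A * (m : ℝ) ^ (-s - 1)) :
    |clenshawCurtisError w f| ≤ A * clenshawCurtisConst s * (N : ℝ) ^ (-s - 1) := by
  have hA0 : 0 ≤ A := by simpa using (abs_nonneg _).trans (hA 1 le_rfl)
  have antitone : AntitoneOn (fun m : ℕ => A * (m : ℝ) ^ (-s - 1)) (Ici 1) := fun m hm n _ hmn =>
    mul_le_mul_of_nonneg_left (rpow_le_rpow_of_nonpos (Nat.cast_pos.2 hm) (Nat.cast_le.2 hmn)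
      (by linarith)) hA0
  have summable : Summable fun m : ℕ => A * (m : ℝ) ^ (-s - 1) :=
    (summable_nat_rpow.2 (by linarith)).mul_left A
  have scale (j : ℕ) : A * (((2 * j + 1) * N : ℕ) : ℝ) ^ (-s - 1) =
      A * (N : ℝ) ^ (-s - 1) * (2 * j + 1 : ℝ) ^ (-s - 1) := by
    push_cast
    rw [mul_rpow (by positivity) (by positivity)]
    ring
  refine (hw.abs_error_le_of_antitoneOn hN hf antitone summable hA).trans_eq ?_
  simp_rw [scale, tsum_mul_left, clenshawCurtisConst]
  ring

theorem rpow_neg_le_two_rpow_mul_add_one_rpow {x p : ℝ} (hx : 1 ≤ x) (hp : 0 ≤ p) :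
    x ^ (-p) ≤ 2 ^ p * (x + 1) ^ (-p) := by
  have hx0 : 0 < x := zero_lt_one.trans_le hx
  rw [rpow_neg hx0.le, rpow_neg (by positivity), ← div_eq_mul_inv, ← div_rpow (by norm_num)
    (by positivity), ← inv_rpow hx0.le]
  gcongr
  rw [inv_le_comm₀ hx0 (by positivity), inv_div]
  linarith

end Rate

/-- If `f` is continuous on `[-1,1]` and of class `X^s` (`s > 0`), then the error of the
`n`-point Clenshaw–Curtis rule is `O(n^{-s-1})`. -/
theorem clenshaw_curtis_rate (s : ℝ) (hs : 0 < s) (f : ℝ → ℝ)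
    (hf : ContinuousOn f (Set.Icc (-1) 1))
    (hXs : ∃ A : ℝ, ∀ m : ℕ, 1 ≤ m → |chebCoeff f m| ≤ A * (m : ℝ) ^ (-s - 1)) :
    ∃ C > 0, ∀ n : ℕ, 2 ≤ n → ∀ w : Fin n → ℝ,
      (∀ p : Polynomial ℝ, p.natDegree ≤ n - 1 →
        ∑ k : Fin n, w k * p.eval (Real.cos ((k : ℝ) * Real.pi / ((n : ℝ) - 1))) =
          ∫ x in (-1:ℝ)..1, p.eval x) →
      |(∫ x in (-1:ℝ)..1, f x) -
          ∑ k : Fin n, w k * f (Real.cos ((k : ℝ) * Real.pi / ((n : ℝ) - 1)))| ≤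
        C * (n : ℝ) ^ (-s - 1) := by
  obtain ⟨A, hA⟩ := hXs
  have hA0 : 0 ≤ A := by simpa using (abs_nonneg _).trans (hA 1 le_rfl)
  have hK : 0 ≤ A * clenshawCurtisConst s := mul_nonneg hA0 (clenshawCurtisConst_nonneg s)
  refine ⟨A * clenshawCurtisConst s * 2 ^ (s + 1) + 1, by positivity, fun n hn w hexact => ?_⟩
  obtain ⟨N, rfl⟩ := Nat.exists_eq_add_of_le' (one_le_two.trans hn)
  have hN : 1 ≤ N := Nat.le_of_succ_le_succ hn
  simp only [Nat.cast_add_one, add_sub_cancel_right, Nat.add_sub_cancel] at hexact ⊢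
  have hw : IsClenshawCurtis w := fun p hp => sub_eq_zero.2 (hexact p hp).symm
  calc |clenshawCurtisError w f|
      ≤ A * clenshawCurtisConst s * (N : ℝ) ^ (-(s + 1)) := by
        rw [neg_add']
        exact hw.abs_error_le_of_rpow_decay (by omega) hs hf hA
    _ ≤ A * clenshawCurtisConst s * (2 ^ (s + 1) * ((N : ℝ) + 1) ^ (-(s + 1))) := by
        gcongr
        exact rpow_neg_le_two_rpow_mul_add_one_rpow (Nat.one_le_cast.2 hN) (by linarith)
    _ ≤ (A * clenshawCurtisConst s * 2 ^ (s + 1) + 1) * ((N : ℝ) + 1) ^ (-s - 1) := by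
        rw [← mul_assoc, neg_add']
        gcongr
        exact le_add_of_nonneg_right zero_le_one
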